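/- Let (s,u) be a global-in-time solution of problem (P) with initial data (s₀,φ) ∈ W. Then inf_{t>0} E(s(t),u(t)) ≥ 0 and ∫₀^∞ s'(t)³ dt < ∞. -/

import Mathlib

open Set MeasureTheory Filter Topology Real
open scoped ENNReal

noncomputable section

/-- `(s₀, φ)` belongs to the class `W`: `s₀ ∈ (0,∞)`, `φ` is Lipschitz on `[0,s₀]`,
not identically zero, nonnegative there, and vanishes at `s₀`. -/
def memW (s₀ : ℝ) (φ : ℝ → ℝ) : Prop :=
  0 < s₀ ∧ (∃ K : NNReal, LipschitzOnWith K φ (Icc 0 s₀)) ∧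
    (∃ x ∈ Icc 0 s₀, φ x ≠ 0) ∧ (∀ x ∈ Icc 0 s₀, 0 ≤ φ x) ∧ φ s₀ = 0

/-- `(s,u)` is a solution of the one-phase Stefan problem (P) on `(0,T]` (finite `T`)
with exponent `p` and initial data `(s₀,φ)`. -/
structure IsSolOn (p s₀ : ℝ) (φ : ℝ → ℝ) (T : ℝ) (s : ℝ → ℝ) (u : ℝ → ℝ → ℝ) : Prop where
  T_pos : 0 < T
  s_cont : ContinuousOn s (Icc 0 T)
  s_diff : ∀ t ∈ Ioc 0 T, DifferentiableAt ℝ s t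
  s_deriv_cont : ContinuousOn (deriv s) (Ioc 0 T)
  s_pos : ∀ t ∈ Icc 0 T, 0 < s t
  ut_diff : ∀ t ∈ Ioc 0 T, ∀ x ∈ Ioo 0 (s t), DifferentiableAt ℝ (fun τ => u τ x) t
  ux_diff : ∀ t ∈ Ioc 0 T, ∀ x ∈ Ioo 0 (s t), DifferentiableAt ℝ (u t) x
  uxx_diff : ∀ t ∈ Ioc 0 T, ∀ x ∈ Ioo 0 (s t), DifferentiableAt ℝ (deriv (u t)) x
  ut_cont : ContinuousOn (fun q : ℝ × ℝ => deriv (fun τ => u τ q.2) q.1)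
      {q : ℝ × ℝ | q.1 ∈ Ioc 0 T ∧ q.2 ∈ Ioo 0 (s q.1)}
  uxx_cont : ContinuousOn (fun q : ℝ × ℝ => deriv (deriv (u q.1)) q.2)
      {q : ℝ × ℝ | q.1 ∈ Ioc 0 T ∧ q.2 ∈ Ioo 0 (s q.1)}
  ux_cont : ContinuousOn (fun q : ℝ × ℝ => deriv (u q.1) q.2)
      {q : ℝ × ℝ | q.1 ∈ Ioc 0 T ∧ q.2 ∈ Icc 0 (s q.1)}
  u_cont : ContinuousOn (fun q : ℝ × ℝ => u q.1 q.2)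
      {q : ℝ × ℝ | q.1 ∈ Icc 0 T ∧ q.2 ∈ Icc 0 (s q.1)}
  u_nonneg : ∀ t ∈ Icc 0 T, ∀ x ∈ Icc 0 (s t), 0 ≤ u t x
  heat : ∀ t ∈ Ioc 0 T, ∀ x ∈ Ioo 0 (s t),
      deriv (fun τ => u τ x) t = deriv (deriv (u t)) x
  bc_zero : ∀ t ∈ Ioc 0 T, -deriv (u t) 0 = u t 0 ^ p
  bc_free : ∀ t ∈ Ioc 0 T, u t (s t) = 0
  stefan : ∀ t ∈ Ioc 0 T, deriv s t = -deriv (u t) (s t)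
  init : ∀ x ∈ Icc 0 s₀, u 0 x = φ x
  init_s : s 0 = s₀

/-- `(s,u)` is a global-in-time solution of problem (P). -/
def IsGlobalSol (p s₀ : ℝ) (φ : ℝ → ℝ) (s : ℝ → ℝ) (u : ℝ → ℝ → ℝ) : Prop :=
  ∀ T : ℝ, 0 < T → IsSolOn p s₀ φ T s u

/-- `Tm ∈ (0,∞]` is the maximal existence time of the solution `(s,u)` of (P) with
initial data `(s₀,φ)`: the solution exists on `(0,T]` for every `T < Tm`, and for
`T > Tm` problem (P) admits no solution on `(0,T]`. -/
def IsMaxSol (p s₀ : ℝ) (φ : ℝ → ℝ) (Tm : ℝ≥0∞) (s : ℝ → ℝ) (u : ℝ → ℝ → ℝ) : Prop :=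
  0 < Tm ∧
    (∀ T : ℝ, 0 < T → ENNReal.ofReal T < Tm → IsSolOn p s₀ φ T s u) ∧
    (∀ T : ℝ, Tm < ENNReal.ofReal T → ¬∃ σ v, IsSolOn p s₀ φ T σ v)

/-- The sup norm `‖u(t)‖_{L^∞(0,s(t))}`. -/
def supNorm (s : ℝ → ℝ) (u : ℝ → ℝ → ℝ) (t : ℝ) : ℝ :=
  sSup (u t '' Ioo 0 (s t))

/-- The `L¹` norm `‖u(t)‖_{L¹(0,s(t))}` of the nonnegative function `u(t,·)`. -/
def L1Norm (s : ℝ → ℝ) (u : ℝ → ℝ → ℝ) (t : ℝ) : ℝ :=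
  ∫ x in (0:ℝ)..(s t), u t x

/-- The energy `E(s(t),u(t))`. -/
def energy (p : ℝ) (s : ℝ → ℝ) (u : ℝ → ℝ → ℝ) (t : ℝ) : ℝ :=
  1 / 2 * (∫ x in (0:ℝ)..(s t), (deriv (u t) x) ^ 2) - u t 0 ^ (p + 1) / (p + 1)

lemma aux_trace {b l : ℝ} (hb : 0 < b) (hl : 0 < l) {y y' : ℝ → ℝ}
    (hy : ContinuousOn y (Icc 0 b)) (hy' : ContinuousOn y' (Icc 0 b))
    (hd : ∀ x ∈ Ioo 0 b, HasDerivAt y (y' x) x) :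
    y 0 ^ 2 ≤ l * (∫ x in (0:ℝ)..b, y' x ^ 2) + (1 / b + 1 / l) * ∫ x in (0:ℝ)..b, y x ^ 2 := by
  have hu : uIcc 0 b = Icc 0 b := uIcc_of_le hb.le
  have h1 : ∫ x in (0:ℝ)..b, (y x ^ 2 / b - 2 * (1 - x / b) * (y x * y' x))
      = (fun x => -((1 - x / b) * y x ^ 2)) b - (fun x => -((1 - x / b) * y x ^ 2)) 0 := by
    apply intervalIntegral.integral_eq_sub_of_hasDerivAt_of_le hb.le
      (f := fun x => -((1 - x / b) * y x ^ 2))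
    · fun_prop
    · intro x hx
      have := ((((hasDerivAt_id x).div_const b).const_sub 1).mul ((hd x hx).pow 2)).neg
      refine HasDerivAt.congr_deriv this ?_
      simp
      ring
    · apply ContinuousOn.intervalIntegrable
      rw [hu]; fun_prop
  have h2 : ∫ x in (0:ℝ)..b, (y x ^ 2 / b - 2 * (1 - x / b) * (y x * y' x))
      ≤ ∫ x in (0:ℝ)..b, (l * y' x ^ 2 + (1 / b + 1 / l) * y x ^ 2) := by
    apply intervalIntegral.integral_mono_on hb.le
    · apply ContinuousOn.intervalIntegrable
      rw [hu]; fun_prop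
    · apply ContinuousOn.intervalIntegrable
      rw [hu]; fun_prop
    · intro x hx
      have hk0 : 0 ≤ 1 - x / b := by
        rw [sub_nonneg, div_le_one hb]; exact hx.2
      have hk1 : 1 - x / b ≤ 1 := by
        have := div_nonneg hx.1 hb.le
        linarith
      set k := 1 - x / b
      have e1 : l * y' x ^ 2 + (1 / b + 1 / l) * y x ^ 2 - (y x ^ 2 / b - 2 * k * (y x * y' x))
          = (1 / l) * (l * y' x + k * y x) ^ 2 + (1 / l) * ((1 - k) * (1 + k)) * y x ^ 2 := by
        field_simp
        ring
      have : 0 ≤ (1 / l) * (l * y' x + k * y x) ^ 2 + (1 / l) * ((1 - k) * (1 + k)) * y x ^ 2 := by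
        have : 0 ≤ 1 - k := by linarith
        positivity
      linarith
  rw [h1, intervalIntegral.integral_add, intervalIntegral.integral_const_mul,
    intervalIntegral.integral_const_mul] at h2
  · simp [hb.ne'] at h2
    simpa using h2
  · apply ContinuousOn.intervalIntegrable
    rw [hu]; fun_prop
  · apply ContinuousOn.intervalIntegrable
    rw [hu]; fun_prop

lemma aux_rem {p a c L : ℝ} (hp : 1 < p) (ha : 0 ≤ a) (hc : 0 ≤ c) (haL : a ≤ L) (hcL : c ≤ L) :
    a ^ p * (a - c) - (a ^ (p + 1) / (p + 1) - c ^ (p + 1) / (p + 1))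
      ≤ (p * L ^ (p - 1)) * (a - c) ^ 2 := by
  have hy : a * c ^ p ≤ a ^ (p + 1) / (p + 1) + (c ^ p) ^ ((p + 1) / p) / ((p + 1) / p) := by
    apply Real.young_inequality_of_nonneg ha (by positivity)
    constructor
    · field_simp
      ring
    · positivity
    · positivity
  have e1 : (c ^ p) ^ ((p + 1) / p) = c ^ p * c := by
    rw [← Real.rpow_mul hc, mul_div_cancel₀ _ (by positivity), Real.rpow_add_one' hc (by positivity)]
  have e2 : c ^ (p + 1) = c ^ p * c := Real.rpow_add_one' hc (by positivity)
  rw [e1] at hy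
  rw [e2]
  have e3 : c ^ p * c / ((p + 1) / p) = c ^ p * c - c ^ p * c / (p + 1) := by
    field_simp
    ring
  have hlip : ‖a ^ p - c ^ p‖ ≤ (p * L ^ (p - 1)) * ‖a - c‖ := by
    apply Convex.norm_image_sub_le_of_norm_deriv_le (s := Icc 0 L) (f := fun x : ℝ => x ^ p)
    · intro x _
      exact (Real.hasDerivAt_rpow_const (Or.inr hp.le)).differentiableAt
    · intro x hx
      rw [Real.deriv_rpow_const, Real.norm_of_nonneg]
      · have := Real.rpow_le_rpow hx.1 hx.2 (by linarith : 0 ≤ p - 1)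
        gcongr
      · have := Real.rpow_nonneg hx.1 (p - 1)
        positivity
    · exact convex_Icc _ _
    · exact ⟨hc, hcL⟩
    · exact ⟨ha, haL⟩
  have h4 : (a ^ p - c ^ p) * (a - c) ≤ (p * L ^ (p - 1)) * (a - c) ^ 2 := by
    calc (a ^ p - c ^ p) * (a - c) ≤ ‖a ^ p - c ^ p‖ * ‖a - c‖ := by
          rw [← norm_mul]; exact le_abs_self _
      _ ≤ ((p * L ^ (p - 1)) * ‖a - c‖) * ‖a - c‖ := by gcongr
      _ = _ := by rw [mul_assoc, ← sq, Real.norm_eq_abs, sq_abs]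
  nlinarith

lemma aux_quad {U V g : ℝ → ℝ → ℝ} {w w' : ℝ → ℝ} {t₁ t₂ b : ℝ} (ht : t₁ ≤ t₂) (hb : 0 < b)
    (hU : Continuous (fun q : ℝ × ℝ => U q.1 q.2)) (hV : Continuous (fun q : ℝ × ℝ => V q.1 q.2))
    (hw : Continuous w) (hw' : Continuous w')
    (hUx : ∀ r ∈ Icc t₁ t₂, ∀ x ∈ Ioo 0 b, HasDerivAt (U r) (V r x) x)
    (hVx : ∀ r ∈ Icc t₁ t₂, ∀ x ∈ Ioo 0 b, HasDerivAt (V r) (g r x) x)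
    (hUt : ∀ r ∈ Ioo t₁ t₂, ∀ x ∈ Ioo 0 b, HasDerivAt (fun τ => U τ x) (g r x) r)
    (hg : ContinuousOn (fun q : ℝ × ℝ => g q.1 q.2) (Icc t₁ t₂ ×ˢ Ioo 0 b))
    (hwd : ∀ x ∈ Ioo 0 b, HasDerivAt w (w' x) x) :
    (∫ x in (0:ℝ)..b, (U t₂ x - w x) ^ 2 / 2) - (∫ x in (0:ℝ)..b, (U t₁ x - w x) ^ 2 / 2)
      = ∫ r in t₁..t₂, (V r b * (U r b - w b) - V r 0 * (U r 0 - w 0)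
          - ∫ x in (0:ℝ)..b, V r x * (V r x - w' x)) := by
  have hU2 : ∀ r, Continuous (U r) := fun r => hU.comp (by fun_prop : Continuous fun x : ℝ => (r, x))
  have hV2 : ∀ r, Continuous (V r) := fun r => hV.comp (by fun_prop : Continuous fun x : ℝ => (r, x))
  have hU1 : ∀ x, Continuous (fun r => U r x) :=
    fun x => hU.comp (by fun_prop : Continuous fun r : ℝ => (r, x))
  -- the primitives
  set L : ℝ → ℝ := fun e => ∫ x in e..(b - e), ((U t₂ x - w x) ^ 2 / 2 - (U t₁ x - w x) ^ 2 / 2)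
    with hL
  set R : ℝ → ℝ := fun e => ∫ r in t₁..t₂, (V r (b - e) * (U r (b - e) - w (b - e))
      - V r e * (U r e - w e) - ((∫ x in (0:ℝ)..(b - e), V r x * (V r x - w' x))
        - ∫ x in (0:ℝ)..e, V r x * (V r x - w' x))) with hR
  have hLc : Continuous L := by
    have hk : Continuous (fun x => (U t₂ x - w x) ^ 2 / 2 - (U t₁ x - w x) ^ 2 / 2) := by
      have := hU2 t₁; have := hU2 t₂
      fun_prop
    have : L = fun e => (∫ x in (0:ℝ)..(b - e), ((U t₂ x - w x) ^ 2 / 2 - (U t₁ x - w x) ^ 2 / 2))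
        - ∫ x in (0:ℝ)..e, ((U t₂ x - w x) ^ 2 / 2 - (U t₁ x - w x) ^ 2 / 2) := by
      ext e
      rw [hL]
      rw [intervalIntegral.integral_interval_sub_left] <;> exact hk.intervalIntegrable _ _
    rw [this]
    have hp := intervalIntegral.continuous_primitive (μ := volume)
      (fun a b => hk.intervalIntegrable a b) 0
    exact (hp.comp (by fun_prop : Continuous fun e : ℝ => b - e)).sub hp
  have hK : Continuous (fun q : (ℝ × ℝ) × ℝ => V q.1.2 q.2 * (V q.1.2 q.2 - w' q.2)) := by
    have h1 : Continuous (fun q : (ℝ × ℝ) × ℝ => V q.1.2 q.2) :=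
      hV.comp (by fun_prop : Continuous fun q : (ℝ × ℝ) × ℝ => (q.1.2, q.2))
    fun_prop
  have hRc : Continuous R := by
    apply intervalIntegral.continuous_parametric_intervalIntegral_of_continuous'
    have h1 : Continuous (fun q : ℝ × ℝ => V q.2 (b - q.1)) :=
      hV.comp (by fun_prop : Continuous fun q : ℝ × ℝ => (q.2, b - q.1))
    have h2 : Continuous (fun q : ℝ × ℝ => U q.2 (b - q.1)) :=
      hU.comp (by fun_prop : Continuous fun q : ℝ × ℝ => (q.2, b - q.1))
    have h3 : Continuous (fun q : ℝ × ℝ => V q.2 q.1) :=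
      hV.comp (by fun_prop : Continuous fun q : ℝ × ℝ => (q.2, q.1))
    have h4 : Continuous (fun q : ℝ × ℝ => U q.2 q.1) :=
      hU.comp (by fun_prop : Continuous fun q : ℝ × ℝ => (q.2, q.1))
    have h5 : Continuous (fun q : ℝ × ℝ => ∫ x in (0:ℝ)..(b - q.1), V q.2 x * (V q.2 x - w' x)) :=
      intervalIntegral.continuous_parametric_intervalIntegral_of_continuous
        (f := fun (q : ℝ × ℝ) x => V q.2 x * (V q.2 x - w' x)) hK (by fun_prop)
    have h6 : Continuous (fun q : ℝ × ℝ => ∫ x in (0:ℝ)..q.1, V q.2 x * (V q.2 x - w' x)) :=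
      intervalIntegral.continuous_parametric_intervalIntegral_of_continuous
        (f := fun (q : ℝ × ℝ) x => V q.2 x * (V q.2 x - w' x)) hK (by fun_prop)
    have : Continuous (fun q : ℝ × ℝ => (V q.2 (b - q.1) * (U q.2 (b - q.1) - w (b - q.1))
      - V q.2 q.1 * (U q.2 q.1 - w q.1) - ((∫ x in (0:ℝ)..(b - q.1), V q.2 x * (V q.2 x - w' x))
        - ∫ x in (0:ℝ)..q.1, V q.2 x * (V q.2 x - w' x)))) := by
      fun_prop
    exact this
  have key : ∀ e ∈ Ioo 0 (b / 2), L e = R e := by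
    intro e he
    have hle : e ≤ b - e := by linarith [he.2]
    have hsub : Icc e (b - e) ⊆ Ioo 0 b := fun x hx => ⟨by linarith [hx.1, he.1], by
      linarith [hx.2, he.1]⟩
    have hgc : ContinuousOn (fun q : ℝ × ℝ => g q.1 q.2 * (U q.1 q.2 - w q.2))
        (Icc t₁ t₂ ×ˢ Icc e (b - e)) := by
      have h1 := hg.mono (Set.prod_mono (Subset.refl (Icc t₁ t₂)) hsub)
      fun_prop
    have hgr : ∀ x ∈ Icc e (b - e), ContinuousOn (fun r => g r x * (U r x - w x)) (Icc t₁ t₂) := by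
      intro x hx
      exact hgc.comp (f := fun r : ℝ => (r, x)) (by fun_prop) (fun r hr => ⟨hr, hx⟩)
    have hgx : ∀ r ∈ Icc t₁ t₂, ContinuousOn (fun x => g r x) (Icc e (b - e)) := by
      intro r hr
      exact hg.comp (f := fun x : ℝ => (r, x)) (by fun_prop) (fun x hx => ⟨hr, hsub hx⟩)
    have s1 : L e = ∫ x in e..(b - e), ∫ r in t₁..t₂, g r x * (U r x - w x) := by
      apply intervalIntegral.integral_congr
      intro x hx
      rw [uIcc_of_le hle] at hx
      symm
      apply intervalIntegral.integral_eq_sub_of_hasDerivAt_of_le ht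
        (f := fun r => (U r x - w x) ^ 2 / 2)
      · have := hU1 x
        fun_prop
      · intro r hr
        refine HasDerivAt.congr_deriv
          ((((hUt r hr x (hsub hx)).sub_const (w x)).pow 2).div_const 2) ?_
        simp
        ring
      · apply ContinuousOn.intervalIntegrable
        rw [uIcc_of_le ht]
        exact hgr x hx
    have s2 : (∫ x in e..(b - e), ∫ r in t₁..t₂, g r x * (U r x - w x))
        = ∫ r in t₁..t₂, ∫ x in e..(b - e), g r x * (U r x - w x) := by
      symm
      apply MeasureTheory.intervalIntegral_intervalIntegral_swap
      rw [uIoc_of_le ht, uIoc_of_le hle]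
      apply IntegrableOn.mono_set (t := Icc t₁ t₂ ×ˢ Icc e (b - e))
      · exact hgc.integrableOn_compact (isCompact_Icc.prod isCompact_Icc)
      · exact Set.prod_mono Ioc_subset_Icc_self Ioc_subset_Icc_self
    rw [s1, s2]
    apply intervalIntegral.integral_congr
    intro r hr
    rw [uIcc_of_le ht] at hr
    have hVr := hV2 r
    have hUr := hU2 r
    have hI : Continuous (fun x => V r x * (V r x - w' x)) := by fun_prop
    change _ = V r (b - e) * (U r (b - e) - w (b - e))
      - V r e * (U r e - w e) - ((∫ x in (0:ℝ)..(b - e), V r x * (V r x - w' x))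
        - ∫ x in (0:ℝ)..e, V r x * (V r x - w' x))
    rw [intervalIntegral.integral_interval_sub_left (hI.intervalIntegrable _ _)
      (hI.intervalIntegrable _ _)]
    have := intervalIntegral.integral_mul_deriv_eq_deriv_mul_of_hasDerivAt (a := e) (b := b - e)
      (u := fun x => U r x - w x) (v := V r) (u' := fun x => V r x - w' x) (v' := g r)
      (by fun_prop) (by fun_prop)
      (by
        intro x hx
        rw [min_eq_left hle, max_eq_right hle] at hx
        have hx' := hsub (Ioo_subset_Icc_self hx)
        exact (hUx r hr x hx').sub (hwd x hx'))
      (by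
        intro x hx
        rw [min_eq_left hle, max_eq_right hle] at hx
        have hx' := hsub (Ioo_subset_Icc_self hx)
        exact hVx r hr x hx')
      ((by fun_prop : Continuous fun x => V r x - w' x).intervalIntegrable _ _)
      (by
        apply ContinuousOn.intervalIntegrable
        rw [uIcc_of_le hle]
        exact hgx r hr)
    simp only [mul_comm (g r _), mul_comm (V r _)] at this ⊢
    exact this
  have hlim : L 0 = R 0 := by
    have h1 : Tendsto L (𝓝[>] 0) (𝓝 (L 0)) := hLc.continuousAt.tendsto.mono_left nhdsWithin_le_nhds
    have h2 : Tendsto R (𝓝[>] 0) (𝓝 (R 0)) := hRc.continuousAt.tendsto.mono_left nhdsWithin_le_nhds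
    apply tendsto_nhds_unique h1
    apply h2.congr'
    filter_upwards [Ioo_mem_nhdsGT (by linarith : (0:ℝ) < b / 2)] with e he
    exact (key e he).symm
  have hL0 : L 0 = (∫ x in (0:ℝ)..b, (U t₂ x - w x) ^ 2 / 2)
      - (∫ x in (0:ℝ)..b, (U t₁ x - w x) ^ 2 / 2) := by
    have := hU2 t₁; have := hU2 t₂
    rw [hL]
    simp only [sub_zero]
    rw [intervalIntegral.integral_sub] <;> apply Continuous.intervalIntegrable <;> fun_prop
  rw [← hL0, hlim, hR]
  simp

lemma aux_glue {f : ℝ × ℝ → ℝ} {S : Set (ℝ × ℝ)}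
    (h : ∀ T > 0, ContinuousOn f {q | q ∈ S ∧ q.1 ≤ T}) : ContinuousOn f S := by
  intro q hq
  have hT : 0 < max q.1 0 + 1 := by positivity
  have hlt : q.1 < max q.1 0 + 1 := by linarith [le_max_left q.1 0]
  have := h _ hT q ⟨hq, hlt.le⟩
  apply this.mono_of_mem_nhdsWithin
  have ho : IsOpen {q : ℝ × ℝ | q.1 < max q.1 0 + 1} := by
    apply isOpen_lt <;> fun_prop
  filter_upwards [self_mem_nhdsWithin, mem_nhdsWithin_of_mem_nhds
    ((isOpen_lt continuous_fst continuous_const).mem_nhds hlt)] with z hz hz2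
  exact ⟨hz, le_of_lt hz2⟩

section sol

variable {p s₀ : ℝ} {φ s : ℝ → ℝ} {u : ℝ → ℝ → ℝ}

lemma g_mem {t : ℝ} (ht : 0 < t) : t ∈ Ioc 0 (t + 1) := ⟨ht, by linarith⟩

lemma g_at (h : IsGlobalSol p s₀ φ s u) {t : ℝ} (ht : 0 < t) : IsSolOn p s₀ φ (t + 1) s u :=
  h _ (by linarith)

lemma g_spos (h : IsGlobalSol p s₀ φ s u) {t : ℝ} (ht : 0 ≤ t) : 0 < s t :=
  (h (t + 1) (by linarith)).s_pos t ⟨ht, by linarith⟩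

lemma g_sdiff (h : IsGlobalSol p s₀ φ s u) {t : ℝ} (ht : 0 < t) : HasDerivAt s (deriv s t) t :=
  ((g_at h ht).s_diff t (g_mem ht)).hasDerivAt

lemma g_scont (h : IsGlobalSol p s₀ φ s u) : ContinuousOn s (Ici 0) := by
  intro t ht
  have := (h (t + 1) (by linarith [mem_Ici.1 ht])).s_cont t ⟨ht, by linarith⟩
  apply this.mono_of_mem_nhdsWithin
  filter_upwards [self_mem_nhdsWithin, mem_nhdsWithin_of_mem_nhds
    (Iio_mem_nhds (by linarith : t < t + 1))] with z hz hz2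
  exact ⟨hz, le_of_lt hz2⟩

lemma g_sdc (h : IsGlobalSol p s₀ φ s u) : ContinuousOn (deriv s) (Ioi 0) := by
  intro t ht
  have := (g_at h ht).s_deriv_cont t (g_mem ht)
  apply this.mono_of_mem_nhdsWithin
  filter_upwards [self_mem_nhdsWithin, mem_nhdsWithin_of_mem_nhds
    (Iio_mem_nhds (by linarith : t < t + 1))] with z hz hz2
  exact ⟨hz, le_of_lt hz2⟩

lemma g_Vc (h : IsGlobalSol p s₀ φ s u) :
    ContinuousOn (fun q : ℝ × ℝ => deriv (u q.1) q.2) {q | 0 < q.1 ∧ q.2 ∈ Icc 0 (s q.1)} := by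
  apply aux_glue
  intro T hT
  exact (h T hT).ux_cont.mono fun q hq => ⟨⟨hq.1.1, hq.2⟩, hq.1.2⟩

lemma g_uc (h : IsGlobalSol p s₀ φ s u) :
    ContinuousOn (fun q : ℝ × ℝ => u q.1 q.2) {q | 0 ≤ q.1 ∧ q.2 ∈ Icc 0 (s q.1)} := by
  apply aux_glue
  intro T hT
  exact (h T hT).u_cont.mono fun q hq => ⟨⟨hq.1.1, hq.2⟩, hq.1.2⟩

lemma g_gc (h : IsGlobalSol p s₀ φ s u) :
    ContinuousOn (fun q : ℝ × ℝ => deriv (deriv (u q.1)) q.2)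
      {q | 0 < q.1 ∧ q.2 ∈ Ioo 0 (s q.1)} := by
  apply aux_glue
  intro T hT
  exact (h T hT).uxx_cont.mono fun q hq => ⟨⟨hq.1.1, hq.2⟩, hq.1.2⟩

lemma g_ux (h : IsGlobalSol p s₀ φ s u) {t x : ℝ} (ht : 0 < t) (hx : x ∈ Ioo 0 (s t)) :
    HasDerivAt (u t) (deriv (u t) x) x :=
  ((g_at h ht).ux_diff t (g_mem ht) x hx).hasDerivAt

lemma g_uxx (h : IsGlobalSol p s₀ φ s u) {t x : ℝ} (ht : 0 < t) (hx : x ∈ Ioo 0 (s t)) :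
    HasDerivAt (deriv (u t)) (deriv (deriv (u t)) x) x :=
  ((g_at h ht).uxx_diff t (g_mem ht) x hx).hasDerivAt

lemma g_ut (h : IsGlobalSol p s₀ φ s u) {t x : ℝ} (ht : 0 < t) (hx : x ∈ Ioo 0 (s t)) :
    HasDerivAt (fun τ => u τ x) (deriv (deriv (u t)) x) t := by
  rw [← (g_at h ht).heat t (g_mem ht) x hx]
  exact ((g_at h ht).ut_diff t (g_mem ht) x hx).hasDerivAt

lemma g_nn (h : IsGlobalSol p s₀ φ s u) {t x : ℝ} (ht : 0 ≤ t) (hx : x ∈ Icc 0 (s t)) :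
    0 ≤ u t x := (h (t + 1) (by linarith)).u_nonneg t ⟨ht, by linarith⟩ x hx

lemma g_b0 (h : IsGlobalSol p s₀ φ s u) {t : ℝ} (ht : 0 < t) : deriv (u t) 0 = - u t 0 ^ p := by
  rw [← (g_at h ht).bc_zero t (g_mem ht), neg_neg]

lemma g_bs (h : IsGlobalSol p s₀ φ s u) {t : ℝ} (ht : 0 < t) : u t (s t) = 0 :=
  (g_at h ht).bc_free t (g_mem ht)

lemma g_st (h : IsGlobalSol p s₀ φ s u) {t : ℝ} (ht : 0 < t) : deriv (u t) (s t) = - deriv s t := by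
  rw [(g_at h ht).stefan t (g_mem ht), neg_neg]

lemma g_Vct (h : IsGlobalSol p s₀ φ s u) {t : ℝ} (ht : 0 < t) :
    ContinuousOn (deriv (u t)) (Icc 0 (s t)) :=
  (g_Vc h).comp (f := fun x : ℝ => (t, x)) (by fun_prop) (fun _ hx => ⟨ht, hx⟩)

lemma g_uct (h : IsGlobalSol p s₀ φ s u) {t : ℝ} (ht : 0 ≤ t) :
    ContinuousOn (u t) (Icc 0 (s t)) :=
  (g_uc h).comp (f := fun x : ℝ => (t, x)) (by fun_prop) (fun _ hx => ⟨ht, hx⟩)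

/-- closedness of slopes at the free boundary -/
lemma g_slope (h : IsGlobalSol p s₀ φ s u) {t : ℝ} (ht : 0 < t) {C : Set ℝ} (hC : IsClosed C)
    (hs : ∀ y ∈ Ioo 0 (s t), u t y / (s t - y) ∈ C) : deriv s t ∈ C := by
  by_contra hn
  have hsp := g_spos h ht.le
  have hc : ContinuousWithinAt (fun x => - deriv (u t) x) (Icc 0 (s t)) (s t) :=
    ((g_Vct h ht) (s t) ⟨hsp.le, le_rfl⟩).neg
  have hmem : Cᶜ ∈ 𝓝 (- deriv (u t) (s t)) := by
    apply hC.isOpen_compl.mem_nhds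
    rw [g_st h ht, neg_neg]; exact hn
  have h1 := hc hmem
  rw [mem_map] at h1
  have h2 : (fun x => - deriv (u t) x) ⁻¹' Cᶜ ∈ 𝓝[<] (s t) := by
    rw [← nhdsWithin_Ioo_eq_nhdsLT hsp]
    exact nhdsWithin_mono _ Ioo_subset_Icc_self h1
  obtain ⟨l, hl, hl2⟩ := (mem_nhdsLT_iff_exists_Ioo_subset' hsp).1 h2
  have hl' : max l 0 < s t := max_lt hl hsp
  set y := (max l 0 + s t) / 2 with hy
  have hy1 : max l 0 < y := by linarith
  have hy2 : y < s t := by linarith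
  have hy0 : 0 < y := lt_of_le_of_lt (le_max_right _ _) hy1
  obtain ⟨c, hc1, hc2⟩ := exists_hasDerivAt_eq_slope (u t) (deriv (u t)) hy2
    ((g_uct h ht.le).mono (Icc_subset_Icc_left hy0.le))
    (fun x hx => g_ux h ht ⟨by linarith [hx.1], hx.2⟩)
  have h3 := hl2 (⟨by linarith [hc1.1, le_max_left l 0], hc1.2⟩ : c ∈ Ioo l (s t))
  apply h3
  have : - deriv (u t) c = u t y / (s t - y) := by
    rw [hc2, g_bs h ht]; ring
  simp only [this]
  exact hs y ⟨hy0, hy2⟩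

lemma g_sd0 (h : IsGlobalSol p s₀ φ s u) {t : ℝ} (ht : 0 < t) : 0 ≤ deriv s t := by
  apply g_slope h ht isClosed_Ici
  intro y hy
  exact div_nonneg (g_nn h ht.le (Ioo_subset_Icc_self hy)) (by linarith [hy.2])

lemma g_mono (h : IsGlobalSol p s₀ φ s u) : MonotoneOn s (Ici 0) := by
  apply monotoneOn_of_deriv_nonneg (convex_Ici 0) (g_scont h)
  · rw [interior_Ici]
    intro t ht
    exact (g_sdiff h ht).differentiableAt.differentiableWithinAt
  · rw [interior_Ici]
    intro t ht
    exact g_sd0 h ht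

def cl (a b x : ℝ) : ℝ := max a (min b x)

lemma cl_cont (a b : ℝ) : Continuous (cl a b) := by unfold cl; fun_prop

lemma cl_mem {a b : ℝ} (hab : a ≤ b) (x : ℝ) : cl a b x ∈ Icc a b :=
  ⟨le_max_left _ _, max_le hab (min_le_left _ _)⟩

lemma cl_eq {a b x : ℝ} (hx : x ∈ Icc a b) : cl a b x = x := by
  unfold cl; rw [min_eq_right hx.2, max_eq_right hx.1]

lemma cl_ev {a b x : ℝ} (hx : x ∈ Ioo a b) : cl a b =ᶠ[𝓝 x] id := by
  filter_upwards [Ioo_mem_nhds hx.1 hx.2] with y hy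
  exact cl_eq (Ioo_subset_Icc_self hy)

lemma g_quad (h : IsGlobalSol p s₀ φ s u) {t : ℝ} (ht : 0 < t) {w w' : ℝ → ℝ}
    (hw : ContinuousOn w (Icc 0 (s t))) (hw' : ContinuousOn w' (Icc 0 (s t)))
    (hwd : ∀ x ∈ Ioo 0 (s t), HasDerivAt w (w' x) x) :
    ∃ f : ℝ → ℝ, Continuous f ∧ (∀ r ∈ Icc t (t + 1), f r =
      deriv (u r) (s t) * (u r (s t) - w (s t)) - deriv (u r) 0 * (u r 0 - w 0)
        - ∫ x in (0:ℝ)..(s t), deriv (u r) x * (deriv (u r) x - w' x)) ∧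
      ∀ τ ∈ Icc t (t + 1), (∫ x in (0:ℝ)..(s t), (u τ x - w x) ^ 2 / 2)
        - (∫ x in (0:ℝ)..(s t), (u t x - w x) ^ 2 / 2) = ∫ r in t..τ, f r := by
  have hb := g_spos h ht.le
  set b := s t with hbdef
  have htt : t ≤ t + 1 := by linarith
  have hsm : ∀ r ∈ Icc t (t + 1), b ≤ s r := fun r hr =>
    g_mono h ht.le (by simp; linarith [hr.1]) hr.1
  have hmap : ∀ r x, 0 < cl t (t + 1) r ∧ cl 0 b x ∈ Icc 0 (s (cl t (t + 1) r)) := fun r x => by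
    have h1 := cl_mem htt r
    have h2 := cl_mem hb.le x
    exact ⟨lt_of_lt_of_le ht h1.1, h2.1, h2.2.trans (hsm _ h1)⟩
  have hcc : Continuous (fun q : ℝ × ℝ => (cl t (t + 1) q.1, cl 0 b q.2)) := by
    have := cl_cont t (t + 1); have := cl_cont 0 b
    fun_prop
  set U : ℝ → ℝ → ℝ := fun r x => u (cl t (t + 1) r) (cl 0 b x) with hUdef
  set V : ℝ → ℝ → ℝ := fun r x => deriv (u (cl t (t + 1) r)) (cl 0 b x) with hVdef
  have hU : Continuous (fun q : ℝ × ℝ => U q.1 q.2) :=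
    (g_uc h).comp_continuous hcc (fun q => ⟨(hmap q.1 q.2).1.le, (hmap q.1 q.2).2⟩)
  have hV : Continuous (fun q : ℝ × ℝ => V q.1 q.2) :=
    (g_Vc h).comp_continuous hcc (fun q => hmap q.1 q.2)
  have hW : Continuous (fun x => w (cl 0 b x)) :=
    hw.comp_continuous (cl_cont _ _) (fun x => cl_mem hb.le x)
  have hW' : Continuous (fun x => w' (cl 0 b x)) :=
    hw'.comp_continuous (cl_cont _ _) (fun x => cl_mem hb.le x)
  have c0 : cl 0 b 0 = 0 := cl_eq ⟨le_rfl, hb.le⟩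
  have cb : cl 0 b b = b := cl_eq ⟨hb.le, le_rfl⟩
  refine ⟨fun r => V r b * (U r b - w (cl 0 b b)) - V r 0 * (U r 0 - w (cl 0 b 0))
          - ∫ x in (0:ℝ)..b, V r x * (V r x - w' (cl 0 b x)), ?_, ?_, ?_⟩
  · have h1 : Continuous (fun r => ∫ x in (0:ℝ)..b, V r x * (V r x - w' (cl 0 b x))) := by
      apply intervalIntegral.continuous_parametric_intervalIntegral_of_continuous'
      have : Continuous (fun q : ℝ × ℝ => V q.1 q.2 * (V q.1 q.2 - w' (cl 0 b q.2))) :=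
        hV.mul (hV.sub (hW'.comp continuous_snd))
      exact this
    have h2 : ∀ x, Continuous fun r => V r x := fun x =>
      hV.comp (by fun_prop : Continuous fun r : ℝ => (r, x))
    have h3 : ∀ x, Continuous fun r => U r x := fun x =>
      hU.comp (by fun_prop : Continuous fun r : ℝ => (r, x))
    have := h2 0; have := h2 b; have := h3 0; have := h3 b
    fun_prop
  · intro r hr
    simp only [hUdef, hVdef, c0, cb, cl_eq hr]
    congr 1
    apply intervalIntegral.integral_congr
    intro x hx
    rw [uIcc_of_le hb.le] at hx
    simp only [cl_eq hx]
  · intro τ hτ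
    have hsub : Icc t τ ⊆ Icc t (t + 1) := Icc_subset_Icc_right hτ.2
    have := aux_quad (U := U) (V := V) (g := fun r x => deriv (deriv (u r)) x)
      (w := fun x => w (cl 0 b x)) (w' := fun x => w' (cl 0 b x)) hτ.1 hb hU hV hW hW'
      (by
        intro r hr x hx
        simp only [hUdef, hVdef]
        rw [cl_eq (hsub hr), cl_eq (Ioo_subset_Icc_self hx)]
        refine HasDerivAt.congr_of_eventuallyEq
          (g_ux h (by linarith [hr.1]) ⟨hx.1, hx.2.trans_le (hsm r (hsub hr))⟩) ?_
        filter_upwards [cl_ev hx] with y hy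
        rw [hy, id])
      (by
        intro r hr x hx
        simp only [hVdef]
        rw [cl_eq (hsub hr)]
        refine HasDerivAt.congr_of_eventuallyEq
          (g_uxx h (by linarith [hr.1]) ⟨hx.1, hx.2.trans_le (hsm r (hsub hr))⟩) ?_
        filter_upwards [cl_ev hx] with y hy
        rw [hy, id])
      (by
        intro r hr x hx
        have hr' : r ∈ Icc t (t + 1) := hsub (Ioo_subset_Icc_self hr)
        simp only [hUdef]
        rw [cl_eq (Ioo_subset_Icc_self hx)]
        refine HasDerivAt.congr_of_eventuallyEq
          (g_ut h (by linarith [hr.1]) ⟨hx.1, hx.2.trans_le (hsm r hr')⟩) ?_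
        filter_upwards [cl_ev (⟨hr.1, hr.2.trans_le hτ.2⟩ : r ∈ Ioo t (t + 1))] with y hy
        rw [hy, id])
      (by
        apply (g_gc h).mono
        rintro ⟨r, x⟩ ⟨hr, hx⟩
        exact ⟨by simp at hr ⊢; linarith [hr.1], hx.1, hx.2.trans_le (hsm r (hsub hr))⟩)
      (by
        intro x hx
        rw [cl_eq (Ioo_subset_Icc_self hx)]
        refine HasDerivAt.congr_of_eventuallyEq (hwd x hx) ?_
        filter_upwards [cl_ev hx] with y hy
        rw [hy, id])
    rw [← this]
    congr 1
    · apply intervalIntegral.integral_congr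
      intro x hx
      rw [uIcc_of_le hb.le] at hx
      simp only [hUdef, cl_eq hx, cl_eq hτ]
    · apply intervalIntegral.integral_congr
      intro x hx
      rw [uIcc_of_le hb.le] at hx
      simp only [hUdef, cl_eq hx, cl_eq (⟨le_rfl, htt⟩ : t ∈ Icc t (t + 1))]

lemma g_movint (h : IsGlobalSol p s₀ φ s u) {G : ℝ → ℝ → ℝ}
    (hG : ContinuousOn (fun q : ℝ × ℝ => G q.1 q.2) {q | 0 < q.1 ∧ q.2 ∈ Icc 0 (s q.1)}) :
    ContinuousOn (fun t => ∫ x in (0:ℝ)..(s t), G t x) (Ioi 0) := by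
  intro t ht
  have ht' : 0 < t := ht
  apply ContinuousAt.continuousWithinAt
  have hle : t / 2 ≤ t + 1 := by linarith
  have hkp : ∀ r, 0 < cl (t / 2) (t + 1) r := fun r =>
    lt_of_lt_of_le (by linarith) (cl_mem hle r).1
  have hsk : Continuous (fun r => s (cl (t / 2) (t + 1) r)) :=
    (g_scont h).comp_continuous (cl_cont _ _) (fun r => (hkp r).le)
  have hK : Continuous (fun q : ℝ × ℝ =>
      G (cl (t / 2) (t + 1) q.1) (s (cl (t / 2) (t + 1) q.1) * cl 0 1 q.2)) := by
    refine hG.comp_continuous (f := fun q : ℝ × ℝ => (cl (t / 2) (t + 1) q.1,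
      s (cl (t / 2) (t + 1) q.1) * cl 0 1 q.2)) ?_ ?_
    · have h3 : Continuous (fun q : ℝ × ℝ => s (cl (t / 2) (t + 1) q.1)) := hsk.comp continuous_fst
      exact ((cl_cont _ _).comp continuous_fst).prodMk
        (h3.mul ((cl_cont 0 1).comp continuous_snd))
    · intro q
      have h1 := g_spos h (hkp q.1).le
      have h2 := cl_mem (zero_le_one (α := ℝ)) q.2
      refine ⟨hkp _, mul_nonneg h1.le h2.1, ?_⟩
      exact mul_le_of_le_one_right h1.le h2.2
  have hc : Continuous (fun r => s (cl (t / 2) (t + 1) r) * ∫ y in (0:ℝ)..1,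
      G (cl (t / 2) (t + 1) r) (s (cl (t / 2) (t + 1) r) * cl 0 1 y)) :=
    hsk.mul (intervalIntegral.continuous_parametric_intervalIntegral_of_continuous'
      (f := fun r y => G (cl (t / 2) (t + 1) r) (s (cl (t / 2) (t + 1) r) * cl 0 1 y)) hK 0 1)
  refine hc.continuousAt.congr ?_
  filter_upwards [cl_ev (⟨by linarith, by linarith⟩ : t ∈ Ioo (t / 2) (t + 1))] with r hr
  rw [hr]
  have : (∫ y in (0:ℝ)..1, G (id r) (s (id r) * cl 0 1 y)) = ∫ y in (0:ℝ)..1, G r (s r * y) := by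
    apply intervalIntegral.integral_congr
    intro y hy
    rw [uIcc_of_le zero_le_one] at hy
    simp only [cl_eq hy, id]
  rw [this, id, intervalIntegral.mul_integral_comp_mul_left (f := fun x => G r x)]
  simp

lemma g_near (h : IsGlobalSol p s₀ φ s u) {H : ℝ × ℝ → ℝ} {t : ℝ} (ht : 0 < t)
    (hH : ContinuousOn H {q | 0 < q.1 ∧ q.2 ∈ Icc 0 (s q.1)}) {O : Set ℝ}
    (hO : O ∈ 𝓝 (H (t, s t))) :
    ∀ᶠ τ in 𝓝[≥] t, ∀ x ∈ Icc (s t) (s τ), H (τ, x) ∈ O := by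
  have hb := g_spos h ht.le
  have h1 := hH (t, s t) ⟨ht, hb.le, le_rfl⟩ hO
  rw [mem_map, Metric.mem_nhdsWithin_iff] at h1
  obtain ⟨e, he, hsub⟩ := h1
  have hs : ∀ᶠ τ in 𝓝[≥] t, s τ < s t + e :=
    nhdsWithin_le_nhds ((g_sdiff h ht).continuousAt.eventually
      (Iio_mem_nhds (by linarith : s t < s t + e)))
  have hτ : ∀ᶠ τ in 𝓝[≥] t, τ < t + e := nhdsWithin_le_nhds (Iio_mem_nhds (by linarith))
  filter_upwards [hs, hτ, self_mem_nhdsWithin] with τ h2 h3 h4 x hx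
  have h4' : t ≤ τ := h4
  apply hsub
  refine ⟨?_, by simp only []; linarith, by simp only []; linarith [hx.1],
    by simp only []; exact hx.2⟩
  rw [Metric.mem_ball, Prod.dist_eq]
  simp only [Real.dist_eq]
  rw [abs_of_nonneg (by linarith), abs_of_nonneg (by linarith [hx.1])]
  exact max_lt (by linarith) (by linarith [hx.2])

def Mm (s : ℝ → ℝ) (u : ℝ → ℝ → ℝ) (t : ℝ) : ℝ := ∫ x in (0:ℝ)..(s t), u t x ^ 2 / 2

def Mp (p : ℝ) (s : ℝ → ℝ) (u : ℝ → ℝ → ℝ) (t : ℝ) : ℝ :=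
  u t 0 ^ (p + 1) - ∫ x in (0:ℝ)..(s t), deriv (u t) x ^ 2

lemma g_u0 (h : IsGlobalSol p s₀ φ s u) {t : ℝ} (ht : 0 ≤ t) : 0 ≤ u t 0 :=
  g_nn h ht ⟨le_rfl, (g_spos h ht).le⟩

lemma g_ucR (h : IsGlobalSol p s₀ φ s u) :
    ContinuousOn (fun q : ℝ × ℝ => u q.1 q.2) {q | 0 < q.1 ∧ q.2 ∈ Icc 0 (s q.1)} :=
  (g_uc h).mono fun _ hq => ⟨hq.1.le, hq.2⟩

lemma g_Mcont (h : IsGlobalSol p s₀ φ s u) : ContinuousOn (Mm s u) (Ioi 0) := by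
  apply g_movint h (G := fun t x => u t x ^ 2 / 2)
  have := g_ucR h
  fun_prop

lemma g_u0cont (h : IsGlobalSol p s₀ φ s u) : ContinuousOn (fun t => u t 0) (Ioi 0) :=
  (g_uc h).comp (f := fun t : ℝ => (t, (0:ℝ))) (by fun_prop)
    (fun t ht => ⟨le_of_lt ht, le_rfl, (g_spos h (le_of_lt ht)).le⟩)

lemma g_Econt (hp : 1 < p) (h : IsGlobalSol p s₀ φ s u) : ContinuousOn (energy p s u) (Ioi 0) := by
  have h1 : ContinuousOn (fun t => ∫ x in (0:ℝ)..(s t), (deriv (u t) x) ^ 2) (Ioi 0) := by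
    apply g_movint h (G := fun t x => deriv (u t) x ^ 2)
    have := g_Vc h
    fun_prop
  have h2 : ContinuousOn (fun t => u t 0 ^ (p + 1)) (Ioi 0) :=
    (g_u0cont h).rpow_const (fun _ _ => Or.inr (by linarith))
  unfold energy
  fun_prop

lemma g_int (hp : 1 < p) (h : IsGlobalSol p s₀ φ s u) {t : ℝ} (ht : 0 < t) :
    ∃ f : ℝ → ℝ, Continuous f ∧ f t = Mp p s u t ∧
      ∀ τ ∈ Icc t (t + 1), (∫ x in (0:ℝ)..(s t), u τ x ^ 2 / 2) - Mm s u t = ∫ r in t..τ, f r := by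
  obtain ⟨f, hf, h1, h2⟩ := g_quad h ht (w := fun _ => 0) (w' := fun _ => 0)
    continuousOn_const continuousOn_const (fun x _ => hasDerivAt_const x 0)
  refine ⟨f, hf, ?_, ?_⟩
  · rw [h1 t ⟨le_rfl, by linarith⟩, g_bs h ht, g_b0 h ht, Mp]
    rw [Real.rpow_add_one' (g_u0 h ht.le)]
    · simp [sq]
    · linarith
  · intro τ hτ
    rw [← h2 τ hτ]
    simp [Mm]

lemma g_mono' (h : IsGlobalSol p s₀ φ s u) {t τ : ℝ} (ht : 0 < t) (hτ : t ≤ τ) : s t ≤ s τ :=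
  g_mono h ht.le (by simp; linarith) hτ

lemma g_uint (h : IsGlobalSol p s₀ φ s u) {t a b : ℝ} (ht : 0 < t) (ha : a ∈ Icc 0 (s t))
    (hb : b ∈ Icc 0 (s t)) {G : ℝ → ℝ} (hG : ContinuousOn G (Icc 0 (s t))) :
    IntervalIntegrable G volume a b := by
  apply ContinuousOn.intervalIntegrable
  apply hG.mono
  exact uIcc_subset_Icc ha hb

lemma g_Mderiv (hp : 1 < p) (h : IsGlobalSol p s₀ φ s u) {t : ℝ} (ht : 0 < t) :
    HasDerivWithinAt (Mm s u) (Mp p s u t) (Ici t) t := by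
  obtain ⟨f, hf, hft, hfi⟩ := g_int hp h ht
  have hb := g_spos h ht.le
  have hd1 : HasDerivWithinAt (fun τ => Mm s u t + ∫ r in t..τ, f r) (Mp p s u t) (Ici t) t := by
    rw [← hft]
    exact ((hf.integral_hasStrictDerivAt t t).hasDerivAt.const_add _).hasDerivWithinAt
  have hd2 : HasDerivWithinAt (fun τ => ∫ x in (s t)..(s τ), u τ x ^ 2 / 2) 0 (Ici t) t := by
    rw [hasDerivWithinAt_iff_isLittleO]
    simp only [intervalIntegral.integral_same, sub_zero, smul_zero]
    have hO : (fun τ => s τ - s t) =O[𝓝[≥] t] fun τ => τ - t :=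
      (g_sdiff h ht).isBigO_sub.mono nhdsWithin_le_nhds
    refine Asymptotics.IsLittleO.trans_isBigO ?_ hO
    rw [Asymptotics.isLittleO_iff]
    intro e he
    have hn := g_near h ht (H := fun q => u q.1 q.2 ^ 2 / 2) (by
      have := g_ucR h
      fun_prop) (O := Iio e) (Iio_mem_nhds (by simp [g_bs h ht]; exact he))
    filter_upwards [hn, self_mem_nhdsWithin] with τ h1 h2
    have hst := g_mono' h ht h2
    apply intervalIntegral.norm_integral_le_of_norm_le_const
    intro x hx
    rw [uIoc_of_le hst] at hx
    rw [Real.norm_of_nonneg (by positivity)]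
    exact le_of_lt (h1 x (Ioc_subset_Icc_self hx))
  have := hd1.add hd2
  rw [add_zero] at this
  refine this.congr_of_eventuallyEq ?_ ?_
  · filter_upwards [self_mem_nhdsWithin, mem_nhdsWithin_of_mem_nhds
      (Iio_mem_nhds (by linarith : t < t + 1))] with τ h1 h2
    have h1' : t ≤ τ := h1
    have hst := g_mono' h ht h1
    have hτ : 0 < τ := by linarith
    have := g_uct h hτ.le
    simp only [Pi.add_apply]
    rw [← hfi τ ⟨h1, le_of_lt h2⟩, add_sub_cancel, intervalIntegral.integral_add_adjacent_intervals]
    · rfl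
    · exact g_uint h hτ ⟨le_rfl, by linarith⟩ ⟨hb.le, hst⟩ (by fun_prop)
    · exact g_uint h hτ ⟨hb.le, hst⟩ ⟨by linarith, le_rfl⟩ (by fun_prop)
  · simp

lemma g_Flow (hp : 1 < p) (h : IsGlobalSol p s₀ φ s u) {t k : ℝ} (ht : 0 < t) (hM : 0 < Mm s u t)
    (hm : 0 < Mp p s u t) (hk : k < Mp p s u t ^ 2 / (4 * Mm s u t)) :
    ∀ᶠ τ in 𝓝[>] t, k * (τ - t) ^ 2 ≤ ∫ x in (0:ℝ)..(s t), (u τ x - u t x) ^ 2 / 2 := by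
  obtain ⟨f, hf, hft, hfi⟩ := g_int hp h ht
  have hb := g_spos h ht.le
  set m := Mp p s u t
  set M := Mm s u t with hMdef
  set th := m / (2 * M) with hth
  have hthp : 0 < th := by positivity
  have hsl : Tendsto (fun τ => (∫ r in t..τ, f r) / (τ - t)) (𝓝[>] t) (𝓝 m) := by
    have h1 := (hf.integral_hasStrictDerivAt t t).hasDerivAt
    rw [hft] at h1
    have := (hasDerivWithinAt_iff_tendsto_slope' (by simp : t ∉ Ioi t)).1 (h1.hasDerivWithinAt (s := Ioi t))
    refine this.congr ?_
    intro τ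
    rw [slope_def_field]
    simp
  have hT : Tendsto (fun τ => th * ((∫ r in t..τ, f r) / (τ - t) - th * M) / (1 + th * (τ - t)))
      (𝓝[>] t) (𝓝 (th * (m - th * M) / (1 + th * (t - t)))) := by
    refine Tendsto.div ((hsl.sub_const _).const_mul _) ?_ (by simp)
    have : Continuous (fun τ => 1 + th * (τ - t)) := by fun_prop
    exact this.continuousAt.tendsto.mono_left nhdsWithin_le_nhds
  have hlim : th * (m - th * M) / (1 + th * (t - t)) = m ^ 2 / (4 * M) := by
    rw [hth]; field_simp; ring
  rw [hlim] at hT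
  filter_upwards [hT.eventually (Ioi_mem_nhds hk), self_mem_nhdsWithin, mem_nhdsWithin_of_mem_nhds
      (Iio_mem_nhds (by linarith : t < t + 1))] with τ h1 h2 h3
  have h2' : t < τ := h2
  have h1' : k < th * ((∫ r in t..τ, f r) / (τ - t) - th * M) / (1 + th * (τ - t)) := h1
  have hst := g_mono' h ht h2'.le
  have hτ : 0 < τ := by linarith
  have huτ : ContinuousOn (u τ) (Icc 0 (s t)) :=
    (g_uct h hτ.le).mono (Icc_subset_Icc_right hst)
  have hut := g_uct h ht.le
  have h0 : (0:ℝ) ∈ Icc 0 (s t) := ⟨le_rfl, hb.le⟩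
  have h0' : s t ∈ Icc 0 (s t) := ⟨hb.le, le_rfl⟩
  set d := τ - t with hd
  have hdp : 0 < d := by rw [hd]; linarith
  set F := ∫ x in (0:ℝ)..(s t), (u τ x - u t x) ^ 2 / 2 with hF
  have key : (∫ r in t..τ, f r) ≤ th * d * M + (1 / (th * d) + 1) * F := by
    rw [← hfi τ ⟨h2'.le, le_of_lt h3⟩, hF, hMdef, Mm, ← intervalIntegral.integral_const_mul,
      ← intervalIntegral.integral_const_mul, ← intervalIntegral.integral_sub
        (g_uint h ht h0 h0' (by fun_prop)) (g_uint h ht h0 h0' (by fun_prop)),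
      ← intervalIntegral.integral_add
        (g_uint h ht h0 h0' (by fun_prop)) (g_uint h ht h0 h0' (by fun_prop))]
    apply intervalIntegral.integral_mono_on hb.le (g_uint h ht h0 h0' (by fun_prop))
      (g_uint h ht h0 h0' (by fun_prop))
    intro x _
    set q := th * d with hq
    have hqp : 0 < q := by positivity
    have : q * (u t x ^ 2 / 2) + (1 / q + 1) * ((u τ x - u t x) ^ 2 / 2)
        - (u τ x ^ 2 / 2 - u t x ^ 2 / 2) = (q * u t x - (u τ x - u t x)) ^ 2 / (2 * q) := by
      field_simp
      ring
    have h5 : 0 ≤ (q * u t x - (u τ x - u t x)) ^ 2 / (2 * q) := by positivity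
    linarith
  set I := ∫ r in t..τ, f r
  have h6 : k * (1 + th * d) < th * (I / d - th * M) := by
    rwa [lt_div_iff₀ (by positivity)] at h1'
  have h7 : th * d * I ≤ (th * d) ^ 2 * M + (1 + th * d) * F := by
    have := mul_le_mul_of_nonneg_left key (by positivity : 0 ≤ th * d)
    have e : th * d * (th * d * M + (1 / (th * d) + 1) * F) = (th * d) ^ 2 * M + (1 + th * d) * F := by
      field_simp
    linarith
  have h8 : k * (1 + th * d) * d ^ 2 ≤ th * d * I - (th * d) ^ 2 * M := by
    have := mul_le_mul_of_nonneg_right h6.le (by positivity : 0 ≤ d ^ 2)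
    have e : th * (I / d - th * M) * d ^ 2 = th * d * I - (th * d) ^ 2 * M := by
      field_simp
    linarith
  have h9 : (k * d ^ 2) * (1 + th * d) ≤ F * (1 + th * d) := by linarith
  exact le_of_mul_le_mul_right h9 (by positivity)

lemma g_Eineq (hp : 1 < p) (h : IsGlobalSol p s₀ φ s u) {t : ℝ} (ht : 0 < t) :
    ∃ C : ℝ, ∀ τ ∈ Ioc t (t + 1), energy p s u τ - energy p s u t ≤
      (∫ x in (s t)..(s τ), (deriv (u τ) x ^ 2 / 2 - deriv (u τ) (s t) * deriv (u τ) x))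
      - (deriv (u τ) (s t) * (u τ (s t) - u t (s t)) - deriv (u τ) 0 * (u τ 0 - u t 0)
        - ∫ x in (0:ℝ)..(s t), deriv (u τ) x * (deriv (u τ) x - deriv (u t) x))
      + C * ∫ x in (0:ℝ)..(s t), (u τ x - u t x) ^ 2 / 2 := by
  have hb := g_spos h ht.le
  obtain ⟨L, hL⟩ : ∃ L, ∀ r ∈ Icc t (t + 1), u r 0 ≤ L := by
    have hc : ContinuousOn (fun r => u r 0) (Icc t (t + 1)) :=
      (g_u0cont h).mono fun r hr => lt_of_lt_of_le ht hr.1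
    obtain ⟨L, hL⟩ := (isCompact_Icc.bddAbove_image hc)
    exact ⟨L, fun r hr => hL ⟨r, hr, rfl⟩⟩
  have hL0 : 0 ≤ L := (g_u0 h ht.le).trans (hL t ⟨le_rfl, by linarith⟩)
  set C0 := p * L ^ (p - 1) + 1 with hC0
  have hC0p : 0 < C0 := by positivity
  refine ⟨2 * C0 * (1 / s t + 1 / (1 / (2 * C0))), ?_⟩
  intro τ hτ
  have hτ0 : 0 < τ := ht.trans hτ.1
  have hst := g_mono' h ht hτ.1.le
  have h0 : (0:ℝ) ∈ Icc 0 (s t) := ⟨le_rfl, hb.le⟩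
  have h0' : s t ∈ Icc 0 (s t) := ⟨hb.le, le_rfl⟩
  have huτ : ContinuousOn (u τ) (Icc 0 (s t)) :=
    (g_uct h hτ0.le).mono (Icc_subset_Icc_right hst)
  have hut := g_uct h ht.le
  have hVτ : ContinuousOn (deriv (u τ)) (Icc 0 (s t)) :=
    (g_Vct h hτ0).mono (Icc_subset_Icc_right hst)
  have hVt := g_Vct h ht
  have hVτ' := g_Vct h hτ0
  have k0 : (0:ℝ) ∈ Icc 0 (s τ) := ⟨le_rfl, hb.le.trans hst⟩
  have k1 : s t ∈ Icc 0 (s τ) := ⟨hb.le, hst⟩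
  have k2 : s τ ∈ Icc 0 (s τ) := ⟨hb.le.trans hst, le_rfl⟩
  have tr := aux_trace hb (l := 1 / (2 * C0)) (by positivity) (y := fun x => u τ x - u t x)
    (y' := fun x => deriv (u τ) x - deriv (u t) x) (by fun_prop) (by fun_prop)
    (fun x hx => (g_ux h hτ0 ⟨hx.1, hx.2.trans_le hst⟩).sub (g_ux h ht hx))
  have rm := aux_rem hp (g_u0 h hτ0.le) (g_u0 h ht.le) (hL τ ⟨hτ.1.le, hτ.2⟩)
    (hL t ⟨le_rfl, by linarith⟩)
  -- boundary value
  have ub : u τ (s t) = - ∫ x in (s t)..(s τ), deriv (u τ) x := by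
    rw [intervalIntegral.integral_eq_sub_of_hasDerivAt_of_le hst (f := u τ)
      ((g_uct h hτ0.le).mono (Icc_subset_Icc_left hb.le))
      (fun x hx => g_ux h hτ0 ⟨hb.trans hx.1, hx.2⟩) (g_uint h hτ0 k1 k2 hVτ'), g_bs h hτ0]
    ring
  have e1 : (∫ x in (s t)..(s τ), (deriv (u τ) x ^ 2 / 2 - deriv (u τ) (s t) * deriv (u τ) x))
      = (∫ x in (s t)..(s τ), deriv (u τ) x ^ 2) / 2 + deriv (u τ) (s t) * u τ (s t) := by
    rw [intervalIntegral.integral_sub (g_uint h hτ0 k1 k2 (by fun_prop))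
      (g_uint h hτ0 k1 k2 (by fun_prop)), intervalIntegral.integral_const_mul,
      intervalIntegral.integral_div, ub]
    ring
  have e2 : (∫ x in (0:ℝ)..(s τ), deriv (u τ) x ^ 2) = (∫ x in (0:ℝ)..(s t), deriv (u τ) x ^ 2)
      + ∫ x in (s t)..(s τ), deriv (u τ) x ^ 2 := by
    rw [intervalIntegral.integral_add_adjacent_intervals] <;>
      exact g_uint h hτ0 (by assumption) (by assumption) (by fun_prop)
  have e3 : (∫ x in (0:ℝ)..(s t), (deriv (u τ) x - deriv (u t) x) ^ 2)
      = 2 * (∫ x in (0:ℝ)..(s t), deriv (u τ) x * (deriv (u τ) x - deriv (u t) x))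
        - (∫ x in (0:ℝ)..(s t), deriv (u τ) x ^ 2) + ∫ x in (0:ℝ)..(s t), deriv (u t) x ^ 2 := by
    rw [← intervalIntegral.integral_const_mul, ← intervalIntegral.integral_sub
        (g_uint h ht h0 h0' (by fun_prop)) (g_uint h ht h0 h0' (by fun_prop)),
      ← intervalIntegral.integral_add
        (g_uint h ht h0 h0' (by fun_prop)) (g_uint h ht h0 h0' (by fun_prop))]
    apply intervalIntegral.integral_congr
    intro x _
    simp only []
    ring
  have e4 : (∫ x in (0:ℝ)..(s t), (u τ x - u t x) ^ 2 / 2)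
      = (∫ x in (0:ℝ)..(s t), (u τ x - u t x) ^ 2) / 2 := by
    rw [intervalIntegral.integral_div]
  rw [e1, e4, energy, energy, e2, g_bs h ht, g_b0 h hτ0]
  have tr2 := mul_le_mul_of_nonneg_left tr hC0p.le
  have rm2 : (p * L ^ (p - 1)) * (u τ 0 - u t 0) ^ 2 ≤ C0 * (u τ 0 - u t 0) ^ 2 := by
    gcongr; rw [hC0]; linarith
  have e5 : C0 * (1 / (2 * C0) * (∫ x in (0:ℝ)..(s t), (deriv (u τ) x - deriv (u t) x) ^ 2)
      + (1 / s t + 1 / (1 / (2 * C0))) * ∫ x in (0:ℝ)..(s t), (u τ x - u t x) ^ 2)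
      = (1 / 2) * (∫ x in (0:ℝ)..(s t), (deriv (u τ) x - deriv (u t) x) ^ 2)
      + 2 * C0 * (1 / s t + 1 / (1 / (2 * C0))) *
        ((∫ x in (0:ℝ)..(s t), (u τ x - u t x) ^ 2) / 2) := by
    field_simp
  rw [e5] at tr2
  linarith

lemma g_bracket (h : IsGlobalSol p s₀ φ s u) {t e : ℝ} (ht : 0 < t) (he : 0 < e) :
    ∀ᶠ τ in 𝓝[>] t,
      (∫ x in (s t)..(s τ), (deriv (u τ) x ^ 2 / 2 - deriv (u τ) (s t) * deriv (u τ) x))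
        ≤ (- deriv s t ^ 3 / 2 + e) * (τ - t) := by
  set v := deriv s t with hv
  have hb := g_spos h ht.le
  have hv0 : 0 ≤ v := g_sd0 h ht
  have hvs := g_st h ht
  -- small d
  have hcont : ContinuousAt (fun q : ℝ × ℝ => q.1 ^ 2 / 2 - q.2 * q.1) (-v, -v) := by
    apply Continuous.continuousAt; fun_prop
  set d := e / (2 * (v + 1)) with hd
  have hdp : 0 < d := by positivity
  have h1 : ∀ᶠ q in 𝓝 (-v) ×ˢ 𝓝 (-v), q.1 ^ 2 / 2 - q.2 * q.1 < - v ^ 2 / 2 + d := by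
    rw [← nhds_prod_eq]
    apply hcont.eventually (Iio_mem_nhds _)
    simp only []
    nlinarith
  obtain ⟨O, hO, hO1⟩ := Filter.mem_prod_self_iff.1 h1
  have hO2 : ∀ x ∈ O, ∀ y ∈ O, x ^ 2 / 2 - y * x < - v ^ 2 / 2 + d :=
    fun x hx y hy => hO1 (show (x, y) ∈ O ×ˢ O from ⟨hx, hy⟩)
  have hn := g_near h ht (g_Vc h) (O := O) (by simp only []; rw [hvs]; exact hO)
  have hsl : Tendsto (fun τ => (s τ - s t) / (τ - t)) (𝓝[>] t) (𝓝 v) := by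
    have := (hasDerivWithinAt_iff_tendsto_slope' (by simp : t ∉ Ioi t)).1
      ((g_sdiff h ht).hasDerivWithinAt (s := Ioi t))
    refine this.congr ?_
    intro τ
    rw [slope_def_field]
  have hsl2 : Tendsto (fun τ => (s τ - s t) / (τ - t) * (- v ^ 2 / 2 + d)) (𝓝[>] t)
      (𝓝 (v * (- v ^ 2 / 2 + d))) := hsl.mul_const _
  have hlt : v * (- v ^ 2 / 2 + d) < - v ^ 3 / 2 + e := by
    have : v * d < e := by
      rw [hd, mul_div_assoc', div_lt_iff₀ (by positivity)]
      nlinarith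
    nlinarith
  filter_upwards [hn.filter_mono (nhdsWithin_mono t Ioi_subset_Ici_self),
    hsl2.eventually (Iio_mem_nhds hlt), self_mem_nhdsWithin] with τ a1 a2 a3
  have a3' : t < τ := a3
  have hτ0 := ht.trans a3'
  have hst := g_mono' h ht a3'.le
  have k1 : s t ∈ Icc 0 (s τ) := ⟨hb.le, hst⟩
  have k2 : s τ ∈ Icc 0 (s τ) := ⟨hb.le.trans hst, le_rfl⟩
  have hV := g_Vct h hτ0
  have b1 : (∫ x in (s t)..(s τ), (deriv (u τ) x ^ 2 / 2 - deriv (u τ) (s t) * deriv (u τ) x))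
      ≤ ∫ x in (s t)..(s τ), (- v ^ 2 / 2 + d) := by
    apply intervalIntegral.integral_mono_on hst (g_uint h hτ0 k1 k2 (by fun_prop))
      intervalIntegrable_const
    intro x hx
    exact (hO2 _ (a1 x hx) _ (a1 (s t) ⟨le_rfl, hst⟩)).le
  rw [intervalIntegral.integral_const, smul_eq_mul] at b1
  have a2' : (s τ - s t) / (τ - t) * (- v ^ 2 / 2 + d) < - v ^ 3 / 2 + e := a2
  have hpos : 0 < τ - t := by linarith
  have := mul_le_mul_of_nonneg_right a2'.le hpos.le
  have e1 : (s τ - s t) / (τ - t) * (- v ^ 2 / 2 + d) * (τ - t)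
      = (s τ - s t) * (- v ^ 2 / 2 + d) := by
    field_simp
  linarith

lemma g_dini (hp : 1 < p) (h : IsGlobalSol p s₀ φ s u) {t k r : ℝ} (ht : 0 < t)
    (hk : ∀ᶠ τ in 𝓝[>] t, k * (τ - t) ^ 2 ≤ ∫ x in (0:ℝ)..(s t), (u τ x - u t x) ^ 2 / 2)
    (hr : - deriv s t ^ 3 / 2 - 2 * k < r) :
    ∃ᶠ z in 𝓝[>] t, slope (energy p s u) t z < r := by
  by_contra hcon
  rw [not_frequently] at hcon
  obtain ⟨C, hC⟩ := g_Eineq hp h ht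
  obtain ⟨f, hf, hf1, hf2⟩ := g_quad h ht (w := u t) (w' := deriv (u t)) (g_uct h ht.le)
    (g_Vct h ht) (fun x hx => g_ux h ht hx)
  set e := (r - (- deriv s t ^ 3 / 2 - 2 * k)) / 3 with he
  have hep : 0 < e := by rw [he]; linarith
  have hbr := g_bracket h ht hep
  set K := - deriv s t ^ 3 / 2 + e - r with hK
  have hK2 : K = 2 * k - 2 * e := by rw [hK, he]; ring
  set K' := 2 * k - e with hK'
  have c1 : ∀ᶠ τ in 𝓝[>] t, K * Real.exp (-C * (τ - t)) < K' := by
    have : Continuous (fun τ => K * Real.exp (-C * (τ - t))) := by fun_prop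
    refine (this.continuousAt.eventually (Iio_mem_nhds ?_)).filter_mono nhdsWithin_le_nhds
    simp
    linarith
  have c2 : ∀ᶠ τ in 𝓝[>] t, Real.exp (C * (τ - t)) * K' / 2 < k := by
    have : Continuous (fun τ => Real.exp (C * (τ - t)) * K' / 2) := by fun_prop
    refine (this.continuousAt.eventually (Iio_mem_nhds ?_)).filter_mono nhdsWithin_le_nhds
    simp
    linarith
  have c3 : ∀ᶠ τ in 𝓝[>] t, τ < t + 1 :=
    mem_nhdsWithin_of_mem_nhds (Iio_mem_nhds (by linarith : t < t + 1))
  have call := ((((hcon.and hbr).and c1).and c2).and c3).and hk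
  obtain ⟨z, hz, hzall⟩ := (mem_nhdsGT_iff_exists_Ioc_subset).1 call
  have hz' : t < z := hz
  have hzz := hzall (⟨hz', le_rfl⟩ : z ∈ Ioc t z)
  set Fi : ℝ → ℝ := fun τ => ∫ r in t..τ, f r with hFi
  have hFid : ∀ τ, HasDerivAt Fi (f τ) τ := fun τ => (hf.integral_hasStrictDerivAt t τ).hasDerivAt
  have hFt : f t = 0 := by
    rw [hf1 t ⟨le_rfl, by linarith⟩]; simp
  have hF0 : Fi t = 0 := by simp [hFi]
  have hFF : ∀ τ ∈ Icc t (t + 1), Fi τ = ∫ x in (0:ℝ)..(s t), (u τ x - u t x) ^ 2 / 2 := by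
    intro τ hτ
    simp only [hFi]
    rw [← hf2 τ hτ]; simp
  have hfb : ∀ τ ∈ Ioc t z, f τ ≤ K * (τ - t) + C * Fi τ := by
    intro τ hτ
    obtain ⟨⟨⟨⟨⟨d1, d2⟩, d3⟩, d4⟩, d5⟩, d6⟩ := hzall hτ
    have hm : τ ∈ Ioc t (t + 1) := ⟨hτ.1, d5.le⟩
    have hE := hC τ hm
    rw [← hf1 τ ⟨hm.1.le, hm.2⟩, ← hFF τ ⟨hm.1.le, hm.2⟩] at hE
    rw [not_lt, slope_def_field, le_div_iff₀ (by linarith [hτ.1])] at d1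
    have : K * (τ - t) = (- deriv s t ^ 3 / 2 + e) * (τ - t) - r * (τ - t) := by rw [hK]; ring
    linarith
  have hcmp : ∀ ⦃τ⦄, τ ∈ Icc t z → Real.exp (-C * (τ - t)) * Fi τ ≤ K' * (τ - t) ^ 2 / 2 := by
    have hd1 : ∀ τ, HasDerivAt (fun τ => Real.exp (-C * (τ - t)) * Fi τ)
        (Real.exp (-C * (τ - t)) * (f τ - C * Fi τ)) τ := by
      intro τ
      have := ((((hasDerivAt_id τ).sub_const t).const_mul (-C)).exp).mul (hFid τ)
      refine HasDerivAt.congr_deriv this ?_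
      simp
      ring
    have hd2 : ∀ τ, HasDerivAt (fun τ => K' * (τ - t) ^ 2 / 2) (K' * (τ - t)) τ := by
      intro τ
      have := ((((hasDerivAt_id τ).sub_const t).pow 2).const_mul K').div_const 2
      refine HasDerivAt.congr_deriv this ?_
      simp
      ring
    refine image_le_of_deriv_right_le_deriv_boundary
      (f := fun τ => Real.exp (-C * (τ - t)) * Fi τ) (B := fun τ => K' * (τ - t) ^ 2 / 2)
      (f' := fun τ => Real.exp (-C * (τ - t)) * (f τ - C * Fi τ)) (B' := fun τ => K' * (τ - t))
      (fun τ _ => (hd1 τ).continuousAt.continuousWithinAt)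
      (fun τ _ => (hd1 τ).hasDerivWithinAt) (by simp [hF0])
      (fun τ _ => (hd2 τ).continuousAt.continuousWithinAt)
      (fun τ _ => (hd2 τ).hasDerivWithinAt) ?_
    · intro τ hτ
      rcases hτ.1.eq_or_lt with hh | hh
      · simp [← hh, hFt, hF0]
      · have hm : τ ∈ Ioc t z := ⟨hh, hτ.2.le⟩
        have g1 := hfb τ hm
        obtain ⟨⟨⟨⟨⟨d1, d2⟩, d3⟩, d4⟩, d5⟩, d6⟩ := hzall hm
        have hpos : 0 < τ - t := by linarith
        calc Real.exp (-C * (τ - t)) * (f τ - C * Fi τ)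
            ≤ Real.exp (-C * (τ - t)) * (K * (τ - t)) := by
              gcongr; linarith
          _ = (K * Real.exp (-C * (τ - t))) * (τ - t) := by ring
          _ ≤ K' * (τ - t) := by gcongr
  have hfin := hcmp (⟨hz'.le, le_rfl⟩ : z ∈ Icc t z)
  obtain ⟨⟨⟨⟨⟨d1, d2⟩, d3⟩, d4⟩, d5⟩, d6⟩ := hzz
  rw [← hFF z ⟨hz'.le, d5.le⟩] at d6
  have hpos : 0 < z - t := by linarith
  have g1 : Fi z ≤ Real.exp (C * (z - t)) * (K' * (z - t) ^ 2 / 2) := by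
    have := mul_le_mul_of_nonneg_left hfin (Real.exp_pos (C * (z - t))).le
    rw [← mul_assoc, ← Real.exp_add] at this
    simpa using this
  have g2 : Real.exp (C * (z - t)) * K' / 2 * (z - t) ^ 2 < k * (z - t) ^ 2 := by gcongr
  linarith

lemma g_Eint (hp : 1 < p) (h : IsGlobalSol p s₀ φ s u) {a b : ℝ} (ha : 0 < a) (hab : a ≤ b) :
    energy p s u b ≤ energy p s u a - (∫ r in a..b, deriv s r ^ 3) / 2 := by
  set k : ℝ → ℝ := fun r => deriv s (max a r) ^ 3 with hk
  have hkc : Continuous k := by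
    have : Continuous (fun r => deriv s (max a r)) :=
      (g_sdc h).comp_continuous (by fun_prop) (fun r => lt_of_lt_of_le ha (le_max_left _ _))
    exact this.pow 3
  have hd : ∀ t, HasDerivAt (fun t => energy p s u a - (∫ r in a..t, k r) / 2) (- (k t / 2)) t := by
    intro t
    have := (((hkc.integral_hasStrictDerivAt a t).hasDerivAt).div_const 2).const_sub (energy p s u a)
    exact this
  have key := image_le_of_liminf_slope_right_le_deriv_boundary (f := energy p s u) (a := a) (b := b)
    ((g_Econt hp h).mono fun t ht => lt_of_lt_of_le ha ht.1)
    (B := fun t => energy p s u a - (∫ r in a..t, k r) / 2) (B' := fun t => - (k t / 2))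
    (by simp) (fun t _ => (hd t).continuousAt.continuousWithinAt)
    (fun t _ => (hd t).hasDerivWithinAt) (by
      intro t ht r hr
      have ht0 : 0 < t := lt_of_lt_of_le ha ht.1
      refine g_dini hp h ht0 (k := 0) (Eventually.of_forall fun τ => ?_) ?_
      · rw [zero_mul]
        exact intervalIntegral.integral_nonneg (g_spos h ht0.le).le fun x _ => by positivity
      · have : k t = deriv s t ^ 3 := by simp only [hk]; rw [max_eq_right ht.1]
        rw [this] at hr
        linarith)
  have := key (⟨hab, le_rfl⟩ : b ∈ Icc a b)
  have e : (∫ r in a..b, k r) = ∫ r in a..b, deriv s r ^ 3 := by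
    apply intervalIntegral.integral_congr
    intro r hr
    rw [uIcc_of_le hab] at hr
    simp only [hk]; rw [max_eq_right hr.1]
  simp only [e] at this
  exact this

lemma g_Edec (hp : 1 < p) (h : IsGlobalSol p s₀ φ s u) {a b : ℝ} (ha : 0 < a) (hab : a ≤ b) :
    energy p s u b ≤ energy p s u a := by
  have h1 := g_Eint hp h ha hab
  have h2 : 0 ≤ ∫ r in a..b, deriv s r ^ 3 :=
    intervalIntegral.integral_nonneg hab fun r hr => pow_nonneg (g_sd0 h (lt_of_lt_of_le ha hr.1)) 3
  linarith

lemma g_MpE (hp : 1 < p) (h : IsGlobalSol p s₀ φ s u) {t : ℝ} (ht : 0 < t) :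
    (p + 1) * (- energy p s u t) ≤ Mp p s u t := by
  have h2 : 0 ≤ ∫ x in (0:ℝ)..(s t), deriv (u t) x ^ 2 :=
    intervalIntegral.integral_nonneg (g_spos h ht.le).le fun r hr => by positivity
  have e : (p + 1) * (- energy p s u t)
      = u t 0 ^ (p + 1) - (p + 1) / 2 * ∫ x in (0:ℝ)..(s t), deriv (u t) x ^ 2 := by
    rw [energy]
    have : p + 1 ≠ 0 := by linarith
    field_simp
    ring
  rw [e, Mp]
  nlinarith

lemma g_Mpos (hp : 1 < p) (h : IsGlobalSol p s₀ φ s u) {t : ℝ} (ht : 0 < t)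
    (hE : energy p s u t < 0) : 0 < Mm s u t := by
  have hb := g_spos h ht.le
  have h0 : 0 < u t 0 := by
    rcases (g_u0 h ht.le).eq_or_lt with h0 | h0
    · exfalso
      have h2 : 0 ≤ ∫ x in (0:ℝ)..(s t), deriv (u t) x ^ 2 :=
        intervalIntegral.integral_nonneg hb.le fun r hr => by positivity
      rw [energy, ← h0, Real.zero_rpow (by linarith)] at hE
      simp at hE
      linarith
    · exact h0
  have hc := g_uct h ht.le
  refine intervalIntegral.integral_pos hb (by fun_prop) (fun x _ => by positivity)
    ⟨0, ⟨le_rfl, hb.le⟩, by positivity⟩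

lemma g_Enn (hp : 1 < p) (h : IsGlobalSol p s₀ φ s u) {t₀ : ℝ} (ht₀ : 0 < t₀) :
    0 ≤ energy p s u t₀ := by
  by_contra hneg
  rw [not_le] at hneg
  set e0 := energy p s u t₀ with he0
  have hEn : ∀ t, t₀ ≤ t → energy p s u t < 0 := fun t ht =>
    lt_of_le_of_lt (g_Edec hp h ht₀ ht) hneg
  have hM : ∀ t, t₀ ≤ t → 0 < Mm s u t := fun t ht =>
    g_Mpos hp h (lt_of_lt_of_le ht₀ ht) (hEn t ht)
  have hm : ∀ t, t₀ ≤ t → 0 < Mp p s u t := fun t ht =>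
    lt_of_lt_of_le (mul_pos (by linarith) (by linarith [hEn t ht]))
      (g_MpE hp h (lt_of_lt_of_le ht₀ ht))
  set M0 := Mm s u t₀ with hM0
  have hM0p : 0 < M0 := hM t₀ le_rfl
  set q := (p + 3) / 4 with hq
  have hq1 : 1 < q := by rw [hq]; linarith
  have hq2 : 2 * q < p + 1 := by rw [hq]; linarith
  have hMc : ∀ b, ContinuousOn (Mm s u) (Icc t₀ b) := fun b =>
    (g_Mcont h).mono fun t ht => lt_of_lt_of_le ht₀ ht.1
  have hEB : ∀ b, t₀ ≤ b → energy p s u b ≤ e0 * (Mm s u b / M0) ^ q := by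
    intro b hb
    refine image_le_of_liminf_slope_right_lt_deriv_boundary' (f := energy p s u) (a := t₀) (b := b)
      (f' := fun t => - (Mp p s u t ^ 2 / (2 * Mm s u t)))
      (B := fun t => e0 * (Mm s u t / M0) ^ q)
      (B' := fun t => e0 * (Mp p s u t / M0 * q * (Mm s u t / M0) ^ (q - 1)))
      ((g_Econt hp h).mono fun t ht => lt_of_lt_of_le ht₀ ht.1) ?_ ?_ ?_ ?_ ?_ ⟨hb, le_rfl⟩
    · intro t ht r hr
      have ht0 : 0 < t := lt_of_lt_of_le ht₀ ht.1
      have hMt := hM t ht.1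
      set k := Mp p s u t ^ 2 / (4 * Mm s u t) - (r + Mp p s u t ^ 2 / (2 * Mm s u t)) / 4 with hk
      have e1 : Mp p s u t ^ 2 / (2 * Mm s u t) = 2 * (Mp p s u t ^ 2 / (4 * Mm s u t)) := by
        field_simp; norm_num
      refine g_dini hp h ht0 (k := k) (g_Flow hp h ht0 hMt (hm t ht.1) ?_) ?_
      · rw [hk]; linarith
      · have := pow_nonneg (g_sd0 h ht0) 3
        rw [hk]; linarith
    · rw [← hM0, div_self hM0p.ne', Real.one_rpow, mul_one]
    · exact ((hMc b).div_const M0).rpow_const (fun _ _ => Or.inr (by linarith)) |>.const_mul e0 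
    · intro t ht
      have ht0 : 0 < t := lt_of_lt_of_le ht₀ ht.1
      exact (((g_Mderiv hp h ht0).div_const M0).rpow_const (Or.inr hq1.le)).const_mul e0
    · intro t ht hEq
      have ht0 : 0 < t := lt_of_lt_of_le ht₀ ht.1
      have hMt := hM t ht.1
      have hmt := hm t ht.1
      have e1 : e0 * (Mp p s u t / M0 * q * (Mm s u t / M0) ^ (q - 1))
          = q * energy p s u t * Mp p s u t / Mm s u t := by
        rw [hEq, Real.rpow_sub_one (by positivity)]
        field_simp
      have e2 : - (Mp p s u t ^ 2 / (2 * Mm s u t)) = (- Mp p s u t / 2) * Mp p s u t / Mm s u t := by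
        field_simp
      rw [e1, e2]
      have := g_MpE hp h ht0
      have h3 := hEn t ht.1
      have : - Mp p s u t / 2 < q * energy p s u t := by nlinarith
      gcongr
  set c := (p + 1) * (- e0) / M0 ^ q with hc
  have hcp : 0 < c := by
    rw [hc]
    exact div_pos (mul_pos (by linarith) (by linarith)) (by positivity)
  have hMpc : ∀ t, t₀ ≤ t → c * Mm s u t ^ q ≤ Mp p s u t := by
    intro t ht
    refine le_trans ?_ (g_MpE hp h (lt_of_lt_of_le ht₀ ht))
    have h1 := hEB t ht
    rw [Real.div_rpow (hM t ht).le hM0p.le] at h1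
    have e1 : c * Mm s u t ^ q = (p + 1) * (- (e0 * (Mm s u t ^ q / M0 ^ q))) := by
      rw [hc]; field_simp
    rw [e1]
    gcongr
  set T := t₀ + M0 ^ (1 - q) / ((q - 1) * c) with hT
  have hqc : 0 < (q - 1) * c := mul_pos (by linarith) hcp
  have hTt : t₀ ≤ T := by rw [hT]; have : 0 ≤ M0 ^ (1 - q) / ((q - 1) * c) := by positivity
                          linarith
  have hlin : ∀ t, HasDerivAt (fun t => M0 ^ (1 - q) - (q - 1) * c * (t - t₀)) (- ((q - 1) * c)) t := by
    intro t
    have := (((hasDerivAt_id t).sub_const t₀).const_mul ((q - 1) * c)).const_sub (M0 ^ (1 - q))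
    simpa using this
  have hfin := image_le_of_deriv_right_le_deriv_boundary (a := t₀) (b := T)
    (f := fun t => Mm s u t ^ (1 - q))
    (f' := fun t => Mp p s u t * (1 - q) * Mm s u t ^ (1 - q - 1))
    (B := fun t => M0 ^ (1 - q) - (q - 1) * c * (t - t₀)) (B' := fun _ => - ((q - 1) * c))
    ((hMc T).rpow_const (fun t ht => Or.inl (hM t ht.1).ne'))
    (fun t ht => (g_Mderiv hp h (lt_of_lt_of_le ht₀ ht.1)).rpow_const (Or.inl (hM t ht.1).ne'))
    (by simp [hM0]) (fun t _ => (hlin t).continuousAt.continuousWithinAt)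
    (fun t _ => (hlin t).hasDerivWithinAt) (by
      intro t ht
      have h1 := hMpc t ht.1
      have hMt := hM t ht.1
      have e1 : Mm s u t ^ (1 - q - 1) = (Mm s u t ^ q)⁻¹ := by
        rw [← Real.rpow_neg hMt.le]; congr 1; ring
      have h2 : c ≤ Mp p s u t * (Mm s u t ^ q)⁻¹ := by
        rw [← div_eq_mul_inv, le_div_iff₀ (by positivity)]; exact h1
      simp only [e1]
      nlinarith) (⟨hTt, le_rfl⟩ : T ∈ Icc t₀ T)
  have hpos : 0 < Mm s u T ^ (1 - q) := Real.rpow_pos_of_pos (hM T hTt) _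
  have e1 : (q - 1) * c * (T - t₀) = M0 ^ (1 - q) := by
    rw [hT, add_sub_cancel_left, mul_div_cancel₀ _ hqc.ne']
  simp only [e1] at hfin
  linarith

lemma g_sbd (hW : memW s₀ φ) (h : IsGlobalSol p s₀ φ s u) :
    ∃ N : ℝ, 0 ≤ N ∧ ∀ t ∈ Ioc (0:ℝ) 1, deriv s t ≤ N := by
  obtain ⟨hs0, ⟨K, hK⟩, -, -, hφ0⟩ := hW
  have hsol := h 1 one_pos
  have hs00 := hsol.init_s
  have hscI : ContinuousOn s (Icc 0 1) := (g_scont h).mono fun t ht => ht.1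
  obtain ⟨L, hL⟩ : ∃ L, ∀ r ∈ Icc (0:ℝ) 1, u r 0 ≤ L := by
    have hc : ContinuousOn (fun t => u t 0) (Icc 0 1) :=
      (g_uc h).comp (f := fun t : ℝ => (t, (0:ℝ))) (by fun_prop)
        (fun t ht => ⟨ht.1, le_rfl, (g_spos h ht.1).le⟩)
    obtain ⟨L, hL⟩ := (isCompact_Icc.bddAbove_image hc)
    exact ⟨L, fun r hr => hL ⟨r, hr, rfl⟩⟩
  have hL0 : 0 ≤ L := (g_u0 h le_rfl).trans (hL 0 ⟨le_rfl, zero_le_one⟩)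
  set N : ℝ := K + L / s₀ with hN
  have hN0 : 0 ≤ N := by positivity
  have hNK : (K : ℝ) ≤ N := by
    have : 0 ≤ L / s₀ := by positivity
    linarith
  have hNL : L ≤ N * s₀ := by
    have e1 : N * s₀ = K * s₀ + L := by rw [hN]; field_simp
    have : 0 ≤ (K : ℝ) * s₀ := by positivity
    linarith
  have main : ∀ e > 0, ∀ t ∈ Icc (0:ℝ) 1, ∀ x ∈ Icc 0 (s t), u t x - N * (s t - x) - e * t ≤ 0 := by
    intro e he
    set Z : ℝ → ℝ → ℝ := fun t x => u t x - N * (s t - x) - e * t with hZ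
    have hsq : ContinuousOn (fun q : ℝ × ℝ => s q.1) (Icc 0 1 ×ˢ Icc 0 1) :=
      hscI.comp continuousOn_fst (fun q hq => hq.1)
    have hmap : ContinuousOn (fun q : ℝ × ℝ => (q.1, s q.1 * q.2)) (Icc 0 1 ×ˢ Icc 0 1) :=
      continuousOn_fst.prodMk (hsq.mul continuousOn_snd)
    have huq : ContinuousOn (fun q : ℝ × ℝ => u q.1 (s q.1 * q.2)) (Icc 0 1 ×ˢ Icc 0 1) := by
      refine (g_uc h).comp hmap ?_
      intro q hq
      have := g_spos h hq.1.1
      exact ⟨hq.1.1, mul_nonneg this.le hq.2.1, mul_le_of_le_one_right this.le hq.2.2⟩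
    have hWc : ContinuousOn (fun q : ℝ × ℝ => Z q.1 (s q.1 * q.2)) (Icc 0 1 ×ˢ Icc 0 1) := by
      simp only [hZ]
      exact (huq.sub (continuousOn_const.mul (hsq.sub (hsq.mul continuousOn_snd)))).sub
        (continuousOn_const.mul continuousOn_fst)
    obtain ⟨⟨t, y⟩, ⟨ht, hy⟩, hmax⟩ := (isCompact_Icc.prod isCompact_Icc).exists_isMaxOn
      (⟨(0, 0), ⟨⟨le_rfl, zero_le_one⟩, ⟨le_rfl, zero_le_one⟩⟩⟩ :
        (Icc (0:ℝ) 1 ×ˢ Icc (0:ℝ) 1).Nonempty) hWc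
    simp only [] at ht hy
    set x := s t * y with hx
    have hst := g_spos h ht.1
    have hxI : x ∈ Icc 0 (s t) := ⟨mul_nonneg hst.le hy.1, mul_le_of_le_one_right hst.le hy.2⟩
    have hmax' : ∀ t' ∈ Icc (0:ℝ) 1, ∀ x' ∈ Icc 0 (s t'), Z t' x' ≤ Z t x := by
      intro t' ht' x' hx'
      have hs' := g_spos h ht'.1
      have := hmax (show (t', x' / s t') ∈ Icc (0:ℝ) 1 ×ˢ Icc (0:ℝ) 1 from
        ⟨ht', div_nonneg hx'.1 hs'.le, (div_le_one hs').2 hx'.2⟩)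
      simp only [mem_ofPred_eq] at this
      rwa [mul_div_cancel₀ _ hs'.ne'] at this
    suffices hZ0 : Z t x ≤ 0 from fun t' ht' x' hx' => (hmax' t' ht' x' hx').trans hZ0
    by_contra hpos
    rw [not_le] at hpos
    -- initial time
    have ht0 : 0 < t := by
      rcases ht.1.eq_or_lt with h0 | h0
      · exfalso
        simp only [hZ] at hpos
        rw [← h0, hs00] at hxI
        rw [← h0, hsol.init x hxI, hs00] at hpos
        have h2 := hK.dist_le_mul x hxI s₀ ⟨hs0.le, le_rfl⟩
        rw [Real.dist_eq, Real.dist_eq, hφ0, sub_zero, abs_sub_comm x s₀,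
          abs_of_nonneg (by linarith [hxI.2] : 0 ≤ s₀ - x)] at h2
        have h3 := le_abs_self (φ x)
        have h4 : (K : ℝ) * (s₀ - x) ≤ N * (s₀ - x) :=
          mul_le_mul_of_nonneg_right hNK (by linarith [hxI.2])
        linarith
      · exact h0
    have hss : s₀ ≤ s t := by rw [← hs00]; exact g_mono h (by simp) ht.1 ht.1
    have hx0 : 0 < x := by
      rcases hxI.1.eq_or_lt with h0 | h0
      · exfalso
        simp only [hZ] at hpos
        rw [← h0] at hpos
        have h1 := hL t ht
        have h2 : N * s₀ ≤ N * s t := by gcongr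
        have h3 : 0 < e * t := by positivity
        linarith
      · exact h0
    have hx1 : x < s t := by
      rcases hxI.2.eq_or_lt with h0 | h0
      · exfalso
        simp only [hZ] at hpos
        rw [h0, g_bs h ht0] at hpos
        have h3 : 0 < e * t := by positivity
        linarith
      · exact h0
    have hxo : x ∈ Ioo 0 (s t) := ⟨hx0, hx1⟩
    have hd0 := g_sd0 h ht0
    -- time derivative
    have htd : 0 ≤ deriv (deriv (u t)) x - N * deriv s t - e := by
      have hd : HasDerivAt (fun τ => Z τ x) (deriv (deriv (u t)) x - N * deriv s t - e) t := by
        have := ((g_ut h ht0 hxo).sub (((g_sdiff h ht0).sub_const x).const_mul N)).sub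
          ((hasDerivAt_id t).const_mul e)
        rw [mul_one] at this
        exact this
      have hsl := (hasDerivWithinAt_iff_tendsto_slope' (by simp : t ∉ Iio t)).1
        (hd.hasDerivWithinAt (s := Iio t))
      refine ge_of_tendsto hsl ?_
      have c1 : ∀ᶠ τ in 𝓝[<] t, x < s τ := ((g_sdiff h ht0).continuousAt.eventually
        (Ioi_mem_nhds hx1)).filter_mono nhdsWithin_le_nhds
      have c2 : ∀ᶠ τ in 𝓝[<] t, 0 < τ := mem_nhdsWithin_of_mem_nhds (Ioi_mem_nhds ht0)
      filter_upwards [c1, c2, self_mem_nhdsWithin] with τ d1 d2 d3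
      have d3' : τ < t := d3
      rw [slope_def_field]
      have := hmax' τ ⟨d2.le, d3'.le.trans ht.2⟩ x ⟨hx0.le, d1.le⟩
      exact div_nonneg_of_nonpos (by linarith) (by linarith)
    have hNd : 0 ≤ N * deriv s t := mul_nonneg hN0 hd0
    have hpp : 0 < deriv (deriv (u t)) x := by linarith
    -- space derivatives
    set f : ℝ → ℝ := fun y => u t y + N * y with hf
    have hnh : Ioo 0 (s t) ∈ 𝓝 x := Ioo_mem_nhds hx0 hx1
    have hfd : deriv f =ᶠ[𝓝 x] fun y => deriv (u t) y + N := by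
      filter_upwards [hnh] with y hy
      have := (g_ux h ht0 hy).add ((hasDerivAt_id y).const_mul N)
      rw [mul_one] at this
      exact this.deriv
    have hfdd : deriv (deriv f) x = deriv (deriv (u t)) x := by
      rw [hfd.deriv_eq]
      exact ((g_uxx h ht0 hxo).add_const N).deriv
    have hlm : IsLocalMax f x := by
      filter_upwards [hnh] with y hy
      have := hmax' t ht y ⟨hy.1.le, hy.2.le⟩
      simp only [hZ] at this
      simp only [hf]
      linarith
    have hfc : ContinuousAt f x :=
      (g_ux h ht0 hxo).continuousAt.add (by fun_prop)
    have hmin := isLocalMin_of_deriv_deriv_pos (by rw [hfdd]; exact hpp) hlm.deriv_eq_zero hfc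
    have hconst : f =ᶠ[𝓝 x] fun _ => f x := by
      filter_upwards [hlm, hmin] with y h1 h2
      exact le_antisymm h1 h2
    have h5 : deriv (deriv f) x = 0 := by
      have h6 := hconst.deriv
      rw [h6.deriv_eq]
      simp
    rw [hfdd] at h5
    linarith
  refine ⟨N, hN0, ?_⟩
  intro t ht
  refine g_slope h ht.1 (C := Iic N) isClosed_Iic ?_
  intro y hy
  have hpos : 0 < s t - y := by linarith [hy.2]
  rw [mem_Iic, div_le_iff₀ hpos]
  refine le_of_forall_pos_le_add ?_
  intro e he
  have h1 := main e he t ⟨ht.1.le, ht.2⟩ y ⟨hy.1.le, hy.2.le⟩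
  have h2 : e * t ≤ e := mul_le_of_le_one_right he.le ht.2
  linarith

end sol


/-- Proposition 3.2: nonnegative energy and finiteness of `∫₀^∞ s'(t)³ dt`
for global-in-time solutions. -/
theorem stmt_13 (p : ℝ) (hp : 1 < p) (s₀ : ℝ) (φ : ℝ → ℝ) (hW : memW s₀ φ)
    (s : ℝ → ℝ) (u : ℝ → ℝ → ℝ) (hsol : IsGlobalSol p s₀ φ s u) :
    (∀ t : ℝ, 0 < t → 0 ≤ energy p s u t) ∧
    (∫⁻ t in Ioi (0:ℝ), ENNReal.ofReal ((deriv s t) ^ 3)) < ⊤ := by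
  refine ⟨fun t ht => g_Enn hp hsol ht, ?_⟩
  obtain ⟨N, hN0, hN⟩ := g_sbd hW hsol
  rw [← Ioc_union_Ioi_eq_Ioi (zero_le_one (α := ℝ))]
  refine lt_of_le_of_lt (lintegral_union_le _ _ _) (ENNReal.add_lt_top.2 ⟨?_, ?_⟩)
  · calc (∫⁻ t in Ioc (0:ℝ) 1, ENNReal.ofReal ((deriv s t) ^ 3))
        ≤ ∫⁻ t in Ioc (0:ℝ) 1, ENNReal.ofReal (N ^ 3) := by
          apply setLIntegral_mono measurable_const
          intro t ht
          apply ENNReal.ofReal_le_ofReal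
          exact pow_le_pow_left₀ (g_sd0 hsol ht.1) (hN t ht) 3
      _ < ⊤ := by
          rw [setLIntegral_const]
          simp
  · have hc : ContinuousOn (fun t => deriv s t ^ 3) (Ioi 0) := (g_sdc hsol).pow 3
    have hci : ∀ b : ℝ, ContinuousOn (fun t => deriv s t ^ 3) (Icc 1 b) := fun b =>
      hc.mono fun t ht => lt_of_lt_of_le one_pos ht.1
    have hint : IntegrableOn (fun t => deriv s t ^ 3) (Ioi 1) := by
      refine integrableOn_Ioi_of_intervalIntegral_norm_bounded (2 * energy p s u 1) 1
        (b := fun b : ℝ => b) (l := atTop) ?_ tendsto_id ?_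
      · intro b
        exact ((hci b).integrableOn_Icc).mono_set Ioc_subset_Icc_self
      · filter_upwards [eventually_ge_atTop 1] with b hb
        have e : (∫ x in (1:ℝ)..b, ‖deriv s x ^ 3‖) = ∫ x in (1:ℝ)..b, deriv s x ^ 3 := by
          apply intervalIntegral.integral_congr
          intro r hr
          rw [uIcc_of_le hb] at hr
          simp only []
          rw [Real.norm_of_nonneg]
          exact pow_nonneg (g_sd0 hsol (lt_of_lt_of_le one_pos hr.1)) 3
        rw [e]
        have h1 := g_Eint hp hsol one_pos hb
        have h2 := g_Enn hp hsol (lt_of_lt_of_le one_pos hb)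
        linarith
    exact hint.lintegral_lt_top
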